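/- arXiv:1411.6363 — 4 statements merged into one kernel-verified Lean document; each statement's English description precedes it below -/
import Mathlib

section
/- Let n be a positive integer and let σ be a decorated permutation of order n, and set m = inv(σ) and k = (1/n)·∑_{i=1}^n (σ(i) − i) (an integer with 0 ≤ k ≤ n). Then there exist integers i₁, …, i_m such that, defining σ₀ = σ and σ_r = σ_{r−1} ∘ t_{i_r, i_r + 1} for 1 ≤ r ≤ m, one has σ_{r−1}(i_r) > σ_{r−1}(i_r + 1) for every 1 ≤ r ≤ m, and σ_m(i) = i + k for all i ∈ ℤ. In other words, σ is transformed into the top-cell permutation i ↦ i + k by a sequence of inv(σ) strictly adjacent inversion-removing transpositions. -/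
/-- A decorated permutation of order `n`: a bijection `σ : ℤ → ℤ` with
`σ (i + n) = σ i + n` and `i ≤ σ i ≤ i + n` for all `i`. -/
def IsDecoratedPerm (n : ℤ) (σ : ℤ → ℤ) : Prop :=
  Function.Bijective σ ∧ (∀ i : ℤ, σ (i + n) = σ i + n) ∧ ∀ i : ℤ, i ≤ σ i ∧ σ i ≤ i + n

/-- The affine transposition `t_{a,b}`: swaps `a + m*n` and `b + m*n` for every `m : ℤ`
and fixes all integers not congruent to `a` or `b` modulo `n`. -/
def affT (n a b : ℤ) (i : ℤ) : ℤ :=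
  if (i - a) % n = 0 then i + (b - a)
  else if (i - b) % n = 0 then i - (b - a)
  else i

/-- The inversion set `Inv(σ) = {(i, j) : 1 ≤ i ≤ n, i < j, σ i > σ j}`. -/
def InvSet (n : ℤ) (σ : ℤ → ℤ) : Set (ℤ × ℤ) :=
  {p : ℤ × ℤ | 1 ≤ p.1 ∧ p.1 ≤ n ∧ p.1 < p.2 ∧ σ p.2 < σ p.1}

theorem affT_cases (n a i : ℤ) :
    (∃ q, i = a + n * q ∧ affT n a (a+1) i = i + 1) ∨
    (∃ q, i = a + 1 + n * q ∧ affT n a (a+1) i = i - 1) ∨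
    ((¬ n ∣ i - a) ∧ (¬ n ∣ i - (a+1)) ∧ affT n a (a+1) i = i) := by
  unfold affT
  split_ifs with h1 h2
  · obtain ⟨q, hq⟩ := Int.dvd_of_emod_eq_zero h1
    exact Or.inl ⟨q, by omega, by omega⟩
  · obtain ⟨q, hq⟩ := Int.dvd_of_emod_eq_zero h2
    exact Or.inr (Or.inl ⟨q, by omega, by omega⟩)
  · refine Or.inr (Or.inr ⟨fun h => h1 (Int.emod_eq_zero_of_dvd h),
      fun h => h2 (Int.emod_eq_zero_of_dvd h), rfl⟩)

theorem not_dvd_one (n : ℤ) (hn : 2 ≤ n) : ¬ n ∣ 1 := by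
  intro h
  have := Int.le_of_dvd (by norm_num) h
  omega

theorem affT_left (n a i q : ℤ) (h : i = a + n * q) : affT n a (a+1) i = i + 1 := by
  unfold affT
  rw [if_pos (Int.emod_eq_zero_of_dvd ⟨q, by omega⟩)]
  omega

theorem affT_right (n a i q : ℤ) (hn : 2 ≤ n) (h : i = a + 1 + n * q) :
    affT n a (a+1) i = i - 1 := by
  unfold affT
  rw [if_neg, if_pos (Int.emod_eq_zero_of_dvd ⟨q, by omega⟩)]
  · omega
  · intro h'
    obtain ⟨r, hr⟩ := Int.dvd_of_emod_eq_zero h'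
    exact not_dvd_one n hn ⟨r - q, by rw [mul_sub]; omega⟩

theorem affT_mid (n a i : ℤ) (h : ¬ n ∣ i - a) (h' : ¬ n ∣ i - (a+1)) :
    affT n a (a+1) i = i := by
  unfold affT
  rw [if_neg (fun e => h (Int.dvd_of_emod_eq_zero e)),
    if_neg (fun e => h' (Int.dvd_of_emod_eq_zero e))]

theorem affT_invol (n a : ℤ) (hn : 2 ≤ n) : Function.Involutive (affT n a (a+1)) := by
  intro i
  rcases affT_cases n a i with ⟨q, hq, h⟩ | ⟨q, hq, h⟩ | ⟨h1, h2, h⟩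
  · rw [h, affT_right n a (i+1) q hn (by omega)]; omega
  · rw [h, affT_left n a (i-1) q (by omega)]; omega
  · rw [h, h]

theorem affT_add (n a i : ℤ) (hn : 2 ≤ n) :
    affT n a (a+1) (i + n) = affT n a (a+1) i + n := by
  rcases affT_cases n a i with ⟨q, hq, h⟩ | ⟨q, hq, h⟩ | ⟨h1, h2, h⟩
  · rw [h, affT_left n a (i+n) (q+1) (by rw [mul_add]; omega)]; omega
  · rw [h, affT_right n a (i+n) (q+1) hn (by rw [mul_add]; omega)]; omega
  · rw [h, affT_mid]
    · rintro ⟨q, hq⟩; exact h1 ⟨q - 1, by rw [mul_sub]; omega⟩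
    · rintro ⟨q, hq⟩; exact h2 ⟨q - 1, by rw [mul_sub]; omega⟩

theorem affT_lt (n a i j : ℤ) (h : ¬ n ∣ i - a) : i < affT n a (a+1) j ↔ i < j := by
  rcases affT_cases n a j with ⟨q, hq, e⟩ | ⟨q, hq, e⟩ | ⟨h1, h2, e⟩
  · have : i ≠ j := fun e => h ⟨q, by omega⟩
    omega
  · have : i ≠ j - 1 := fun e => h ⟨q, by omega⟩
    omega
  · rw [e]

theorem sum_shift (n : ℤ) (hn : 0 < n) {M : Type*} [AddCommMonoid M] (g : ℤ → M)
    (hg : ∀ i, g (i + n) = g i) (a : ℤ) :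
    ∑ i ∈ Finset.Icc 1 n, g i = ∑ i ∈ Finset.Ico a (a + n), g i := by
  have step : ∀ b : ℤ, ∑ i ∈ Finset.Ico b (b + n), g i
      = ∑ i ∈ Finset.Ico (b+1) (b + 1 + n), g i := by
    intro b
    have e1 : Finset.Ico b (b+n) = insert b (Finset.Ico (b+1) (b+n)) := by
      ext x; simp only [Finset.mem_Ico, Finset.mem_insert]; omega
    have e2 : Finset.Ico (b+1) (b+1+n) = insert (b+n) (Finset.Ico (b+1) (b+n)) := by
      ext x; simp only [Finset.mem_Ico, Finset.mem_insert]; omega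
    rw [e1, e2, Finset.sum_insert (by simp), Finset.sum_insert (by simp), hg]
  have e : Finset.Icc 1 n = Finset.Ico 1 (1+n) := by
    ext x; simp only [Finset.mem_Ico, Finset.mem_Icc]; omega
  rw [e]
  induction a using Int.induction_on with
  | zero => rw [step 0]; rfl
  | succ i ih => rw [ih, step]
  | pred i ih => rw [ih, step (-(i:ℤ) - 1)]; simp

theorem sum_split (n a : ℤ) (hn : 2 ≤ n) {M : Type*} [AddCommMonoid M] (g : ℤ → M)
    (hg : ∀ i, g (i + n) = g i) :
    ∑ i ∈ Finset.Icc 1 n, g i = g a + (g (a+1) + ∑ i ∈ Finset.Ico (a+2) (a + n), g i) := by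
  rw [sum_shift n (by omega) g hg a]
  have e1 : Finset.Ico a (a+n) = insert a (insert (a+1) (Finset.Ico (a+2) (a+n))) := by
    ext x; simp only [Finset.mem_Ico, Finset.mem_insert]; omega
  rw [e1, Finset.sum_insert (by simp), Finset.sum_insert (by simp)]

def rowInv (σ : ℤ → ℤ) (i : ℤ) : Set ℤ := {j | i < j ∧ σ j < σ i}

theorem rowInv_finite (n : ℤ) (σ : ℤ → ℤ) (h : IsDecoratedPerm n σ) (i : ℤ) :
    (rowInv σ i).Finite := by
  apply (Set.finite_Icc i (i+n)).subset
  rintro j ⟨h1, h2⟩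
  have := h.2.2 i
  have := h.2.2 j
  constructor <;> omega

theorem rowInv_periodic (n : ℤ) (σ : ℤ → ℤ) (h : IsDecoratedPerm n σ) (i : ℤ) :
    (rowInv σ (i+n)).ncard = (rowInv σ i).ncard := by
  have : rowInv σ (i+n) = (fun j => j + n) '' rowInv σ i := by
    ext j
    simp only [rowInv, Set.mem_ofPred_eq, Set.mem_image]
    constructor
    · rintro ⟨h1, h2⟩
      refine ⟨j - n, ⟨by omega, ?_⟩, by omega⟩
      have := h.2.1 (j - n)
      have := h.2.1 i
      rw [sub_add_cancel] at *
      omega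
    · rintro ⟨x, ⟨h1, h2⟩, rfl⟩
      have := h.2.1 x
      have := h.2.1 i
      constructor <;> omega
  rw [this, Set.ncard_image_of_injective _ (add_left_injective n)]

theorem inv_eq_sum (n : ℤ) (σ : ℤ → ℤ) (h : IsDecoratedPerm n σ) :
    (InvSet n σ).Finite ∧ (InvSet n σ).ncard = ∑ i ∈ Finset.Icc 1 n, (rowInv σ i).ncard := by
  classical
  let F : ℤ → Finset ℤ := fun i => (rowInv_finite n σ h i).toFinset
  have e : InvSet n σ =
      ↑((Finset.Icc 1 n).biUnion fun i => (F i).image (Prod.mk i)) := by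
    ext ⟨i, j⟩
    simp only [InvSet, Set.mem_ofPred_eq, Finset.coe_biUnion, Set.mem_iUnion, Finset.coe_image,
      Set.mem_image, Finset.mem_coe, Finset.mem_Icc, F, Set.Finite.mem_toFinset, rowInv,
      Prod.mk.injEq]
    constructor
    · rintro ⟨h1, h2, h3, h4⟩
      exact ⟨i, ⟨h1, h2⟩, j, ⟨h3, h4⟩, rfl, rfl⟩
    · rintro ⟨_, ⟨h1, h2⟩, _, ⟨h3, h4⟩, rfl, rfl⟩
      exact ⟨h1, h2, h3, h4⟩
  rw [e]
  refine ⟨Finset.finite_toSet _, ?_⟩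
  rw [Set.ncard_coe_finset, Finset.card_biUnion]
  · apply Finset.sum_congr rfl
    intro i _
    rw [Finset.card_image_of_injective _ (Prod.mk_right_injective i),
      Set.ncard_eq_toFinset_card _ (rowInv_finite n σ h i)]
  · intro x _ y _ hxy
    rw [Function.onFun, Finset.disjoint_left]
    rintro ⟨p, q⟩ h1 h2
    simp only [Finset.mem_image, Prod.mk.injEq] at h1 h2
    obtain ⟨_, _, rfl, _⟩ := h1
    obtain ⟨_, _, rfl, _⟩ := h2
    exact hxy rfl

theorem two_le (n a : ℤ) (σ : ℤ → ℤ) (h : IsDecoratedPerm n σ) (ha : σ (a+1) < σ a) :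
    2 ≤ n := by
  have := h.2.2 a
  have := h.2.2 (a+1)
  omega

theorem per_mul (n : ℤ) (σ : ℤ → ℤ) (h : ∀ i, σ (i + n) = σ i + n) (i q : ℤ) :
    σ (i + n * q) = σ i + n * q := by
  induction q using Int.induction_on with
  | zero => simp
  | succ q ih =>
    have := h (i + n * q)
    rw [mul_add, mul_one, ← add_assoc]; omega
  | pred q ih =>
    have := h (i + n * (-(q:ℤ) - 1))
    have e : i + n * (-(q:ℤ) - 1) + n = i + n * -(q:ℤ) := by ring
    have e' : n * (-(q:ℤ) - 1) + n = n * -(q:ℤ) := by ring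
    rw [e] at this
    omega

theorem dec_step (n a : ℤ) (σ : ℤ → ℤ) (h : IsDecoratedPerm n σ) (ha : σ (a+1) < σ a) :
    IsDecoratedPerm n (σ ∘ affT n a (a+1)) := by
  have hn := two_le n a σ h ha
  refine ⟨h.1.comp (affT_invol n a hn).bijective, ?_, ?_⟩
  · intro i
    simp only [Function.comp, affT_add n a i hn, h.2.1]
  · intro i
    simp only [Function.comp]
    have ba := h.2.2 a
    have bb := h.2.2 (a+1)
    rcases affT_cases n a i with ⟨q, hq, e⟩ | ⟨q, hq, e⟩ | ⟨h1, h2, e⟩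
    · have := per_mul n σ h.2.1 (a+1) q
      have e' : affT n a (a+1) i = a + 1 + n * q := by omega
      rw [e', this]; omega
    · have := per_mul n σ h.2.1 a q
      have e' : affT n a (a+1) i = a + n * q := by omega
      rw [e', this]; omega
    · rw [e]; exact h.2.2 i

theorem ncard_pre (n a : ℤ) (hn : 2 ≤ n) (S : Set ℤ) :
    (affT n a (a+1) ⁻¹' S).ncard = S.ncard := by
  rw [← (affT_invol n a hn).image_eq_preimage_symm,
    Set.ncard_image_of_injective _ (affT_invol n a hn).injective]

theorem inv_step (n a : ℤ) (σ : ℤ → ℤ) (h : IsDecoratedPerm n σ) (ha : σ (a+1) < σ a) :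
    (InvSet n σ).ncard = (InvSet n (σ ∘ affT n a (a+1))).ncard + 1 := by
  have hn := two_le n a σ h ha
  have h' := dec_step n a σ h ha
  have ta : affT n a (a+1) a = a + 1 := affT_left n a a 0 (by omega)
  have tb : affT n a (a+1) (a+1) = a := by
    rw [affT_right n a (a+1) 0 hn (by omega)]; omega
  have nd1 : ¬ n ∣ (a+1) - a := by
    rw [add_sub_cancel_left]; exact not_dvd_one n hn
  rw [(inv_eq_sum n σ h).2, (inv_eq_sum n _ h').2,
    sum_split n a hn _ (rowInv_periodic n σ h), sum_split n a hn _ (rowInv_periodic n _ h')]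
  have r1 : (rowInv (σ ∘ affT n a (a+1)) a).ncard = (rowInv σ (a+1)).ncard := by
    rw [← ncard_pre n a hn (rowInv σ (a+1))]
    congr 1
    ext j
    simp only [rowInv, Set.mem_ofPred_eq, Set.mem_preimage, Function.comp, ta,
      affT_lt n a (a+1) j nd1]
    constructor
    · rintro ⟨h1, h2⟩
      refine ⟨?_, h2⟩
      have : j ≠ a + 1 := by
        rintro rfl
        rw [tb] at h2
        omega
      omega
    · rintro ⟨h1, h2⟩
      exact ⟨by omega, h2⟩
  have r2 : (rowInv σ a).ncard = (rowInv (σ ∘ affT n a (a+1)) (a+1)).ncard + 1 := by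
    rw [← ncard_pre n a hn (rowInv (σ ∘ affT n a (a+1)) (a+1))]
    have e : rowInv σ a =
        insert (a+1) (affT n a (a+1) ⁻¹' rowInv (σ ∘ affT n a (a+1)) (a+1)) := by
      ext j
      simp only [rowInv, Set.mem_ofPred_eq, Set.mem_preimage, Set.mem_insert_iff, Function.comp,
        tb, affT_lt n a (a+1) j nd1, affT_invol n a hn j]
      constructor
      · rintro ⟨h1, h2⟩
        by_cases hj : j = a + 1
        · exact Or.inl hj
        · exact Or.inr ⟨by omega, h2⟩
      · rintro (rfl | ⟨h1, h2⟩)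
        · exact ⟨by omega, ha⟩
        · exact ⟨by omega, h2⟩
    have hfin := rowInv_finite n σ h a
    rw [e] at hfin
    rw [e, Set.ncard_insert_of_notMem _ (hfin.subset (Set.subset_insert _ _))]
    simp only [rowInv, Set.mem_ofPred_eq, Set.mem_preimage, tb]
    omega
  have r3 : ∑ i ∈ Finset.Ico (a+2) (a+n), (rowInv (σ ∘ affT n a (a+1)) i).ncard
      = ∑ i ∈ Finset.Ico (a+2) (a+n), (rowInv σ i).ncard := by
    apply Finset.sum_congr rfl
    intro i hi
    rw [Finset.mem_Ico] at hi
    have d1 : ¬ n ∣ i - a := fun hd => by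
      have := Int.le_of_dvd (by omega) hd
      omega
    have d2 : ¬ n ∣ i - (a+1) := fun hd => by
      have := Int.le_of_dvd (by omega) hd
      omega
    rw [← ncard_pre n a hn (rowInv σ i)]
    congr 1
    ext j
    simp only [rowInv, Set.mem_ofPred_eq, Set.mem_preimage, Function.comp,
      affT_mid n a i d1 d2, affT_lt n a i j d1]
  rw [r1, r2, r3]
  omega

theorem sum_step (n a : ℤ) (σ : ℤ → ℤ) (h : IsDecoratedPerm n σ) (ha : σ (a+1) < σ a) :
    ∑ i ∈ Finset.Icc 1 n, (σ i - i) =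
      ∑ i ∈ Finset.Icc 1 n, ((σ ∘ affT n a (a+1)) i - i) := by
  have hn := two_le n a σ h ha
  have h' := dec_step n a σ h ha
  have ta : affT n a (a+1) a = a + 1 := affT_left n a a 0 (by omega)
  have tb : affT n a (a+1) (a+1) = a := by
    rw [affT_right n a (a+1) 0 hn (by omega)]; omega
  rw [sum_split n a hn (fun i => σ i - i) (fun i => by simp only [h.2.1]; omega),
    sum_split n a hn (fun i => (σ ∘ affT n a (a+1)) i - i)
      (fun i => by simp only [h'.2.1]; omega)]
  have r3 : ∑ i ∈ Finset.Ico (a+2) (a+n), ((σ ∘ affT n a (a+1)) i - i)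
      = ∑ i ∈ Finset.Ico (a+2) (a+n), (σ i - i) := by
    apply Finset.sum_congr rfl
    intro i hi
    rw [Finset.mem_Ico] at hi
    have d1 : ¬ n ∣ i - a := fun hd => by
      have := Int.le_of_dvd (by omega) hd
      omega
    have d2 : ¬ n ∣ i - (a+1) := fun hd => by
      have := Int.le_of_dvd (by omega) hd
      omega
    simp only [Function.comp, affT_mid n a i d1 d2]
  rw [r3]
  simp only [Function.comp, ta, tb]
  omega

theorem no_inv (n : ℤ) (hn : 0 < n) (σ : ℤ → ℤ) (h : IsDecoratedPerm n σ)
    (hm : StrictMono σ) (k : ℤ) (hk : n * k = ∑ i ∈ Finset.Icc (1 : ℤ) n, (σ i - i)) (i : ℤ) :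
    σ i = i + k := by
  have hs : ∀ i, σ (i+1) = σ i + 1 := by
    intro i
    obtain ⟨j, hj⟩ := h.1.2 (σ i + 1)
    have h1 : i < j := hm.lt_iff_lt.1 (by omega)
    have h2 : σ i < σ (i+1) := hm (by omega)
    have h3 : σ (i+1) ≤ σ j := hm.monotone (by omega)
    omega
  have hc : ∀ i, σ i = i + σ 0 := by
    intro i
    induction i using Int.induction_on with
    | zero => simp
    | succ q ih => rw [hs, ih]; omega
    | pred q ih =>
      have := hs (-(q:ℤ) - 1)
      rw [sub_add_cancel] at this
      omega
  have : n * k = n * σ 0 := by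
    rw [hk, Finset.sum_congr rfl (g := fun _ => σ 0) (fun i _ => by have := hc i; omega)]
    simp
    omega
  have := mul_left_cancel₀ hn.ne' this
  rw [hc, this]

/-- With `m = inv σ` and `k = (1/n) ∑_{i=1}^n (σ i - i)`, the permutation
`σ` can be taken to the top-cell permutation `i ↦ i + k` by a sequence of `m` strictly
adjacent inversion-removing transpositions. -/
theorem reach_top_cell_by_adjacent_transpositions (n : ℤ) (hn : 0 < n) (σ : ℤ → ℤ)
    (hσ : IsDecoratedPerm n σ) (m : ℕ) (hm : m = (InvSet n σ).ncard)
    (k : ℤ) (hk : n * k = ∑ i ∈ Finset.Icc (1 : ℤ) n, (σ i - i)) :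
    ∃ f : ℕ → ℤ, ∃ τ : ℕ → ℤ → ℤ,
      τ 0 = σ ∧
      (∀ r : ℕ, 1 ≤ r → r ≤ m → τ r = τ (r - 1) ∘ affT n (f r) (f r + 1)) ∧
      (∀ r : ℕ, 1 ≤ r → r ≤ m → τ (r - 1) (f r + 1) < τ (r - 1) (f r)) ∧
      (∀ i : ℤ, τ m i = i + k) := by
  induction m generalizing σ with
  | zero =>
    refine ⟨fun _ => 0, fun _ => σ, rfl, by intro r h1 h2; omega, by intro r h1 h2; omega, ?_⟩
    apply no_inv n hn σ hσ _ k hk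
    apply strictMono_int_of_lt_succ
    intro a
    by_contra hlt
    have hne : σ a ≠ σ (a+1) := fun e => by
      have := hσ.1.1 e
      omega
    have := inv_step n a σ hσ (by omega)
    omega
  | succ m ih =>
    have hex : ∃ a, σ (a+1) < σ a := by
      by_contra! hcon
      have hmono : StrictMono σ := by
        apply strictMono_int_of_lt_succ
        intro a
        refine lt_of_le_of_ne (hcon a) fun e => ?_
        have := hσ.1.1 e
        omega
      have he : InvSet n σ = ∅ := by
        ext ⟨i, j⟩
        simp only [InvSet, Set.mem_ofPred_eq, Set.mem_empty_iff_false, iff_false]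
        rintro ⟨_, _, h3, h4⟩
        have := hmono h3
        omega
      rw [he, Set.ncard_empty] at hm
      omega
    obtain ⟨a, ha⟩ := hex
    have hs := inv_step n a σ hσ ha
    obtain ⟨f, τ, h0, h1, h2, h3⟩ := ih (σ ∘ affT n a (a+1)) (dec_step n a σ hσ ha) (by omega)
      (by rw [hk, sum_step n a σ hσ ha])
    refine ⟨fun r => if r = 1 then a else f (r - 1), fun r => if r = 0 then σ else τ (r - 1),
      by simp, ?_, ?_, by simpa using h3⟩
    · intro r hr1 hr2
      obtain ⟨r, rfl⟩ := Nat.exists_eq_add_of_le' hr1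
      rcases r with _ | r
      · simpa using h0
      · simpa using h1 (r+1) (by omega) (by omega)
    · intro r hr1 hr2
      obtain ⟨r, rfl⟩ := Nat.exists_eq_add_of_le' hr1
      rcases r with _ | r
      · simpa using ha
      · simpa using h2 (r+1) (by omega) (by omega)
end

section
/- Let n be a positive integer, let σ and σ' be decorated permutations of order n, and let a < b < c < a + n be integers. Suppose (a b) is an allowed boundary transposition for σ, (a c) is an allowed boundary transposition for σ', and σ ∘ t_{a,b} = σ' ∘ t_{a,c}. Then ρ := σ ∘ t_{b,c} is a decorated permutation of order n, (b c) is an allowed boundary transposition for ρ with ρ ∘ t_{b,c} = σ, and (a b) is an allowed boundary transposition for ρ with ρ ∘ t_{a,b} = σ'. (Thus σ and σ' have a common parent in the poset of decorated permutations, forming a quadrilateral.) -/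
/-- `(a b)` is an allowed boundary transposition for `σ`: `a < b < a + n`,
`b ≤ σ a < σ b ≤ a + n`, and there is no `q` with `a < q < b` and `σ a < σ q < σ b`. -/
def AllowedBT (n : ℤ) (σ : ℤ → ℤ) (a b : ℤ) : Prop :=
  a < b ∧ b < a + n ∧ b ≤ σ a ∧ σ a < σ b ∧ σ b ≤ a + n ∧
    ¬ ∃ q : ℤ, a < q ∧ q < b ∧ σ a < σ q ∧ σ q < σ b

theorem aux_ndvd (n x : ℤ) (h0 : 0 < x) (h1 : x < n) (m : ℤ) : ¬ (x + m * n) % n = 0 := by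
  rw [Int.add_mul_emod_self_right, Int.emod_eq_of_lt h0.le h1]; omega

theorem affT_left_s8 (n a b m : ℤ) : affT n a b (a + m * n) = b + m * n := by
  have : (a + m * n - a) % n = 0 := by
    rw [show a + m * n - a = m * n by ring]; exact Int.mul_emod_left m n
  simp only [affT, this, if_true]; ring

theorem affT_right_s8 (n a b m : ℤ) (h : a < b) (h' : b < a + n) :
    affT n a b (b + m * n) = a + m * n := by
  have h1 : ¬ (b + m * n - a) % n = 0 := by
    rw [show b + m * n - a = (b - a) + m * n by ring]
    exact aux_ndvd n _ (by omega) (by omega) m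
  have h2 : (b + m * n - b) % n = 0 := by
    rw [show b + m * n - b = m * n by ring]; exact Int.mul_emod_left m n
  simp only [affT, h1, h2, if_true, if_false]; ring

theorem affT_other (n a b i : ℤ) (h : ∀ m, i ≠ a + m * n) (h' : ∀ m, i ≠ b + m * n) :
    affT n a b i = i := by
  have key : ∀ x, (∀ m, i ≠ x + m * n) → ¬ (i - x) % n = 0 := by
    intro x hx h0
    obtain ⟨k, hk⟩ := Int.dvd_of_emod_eq_zero h0
    exact hx k (by linarith [mul_comm n k])
  simp only [affT, key a h, key b h', if_false]

theorem res_ne (n x y : ℤ) (h : x < y) (h' : y < x + n) (m k : ℤ) : x + m * n ≠ y + k * n := by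
  intro e
  apply aux_ndvd n (y - x) (by omega) (by omega) (k - m)
  rw [show y - x + (k - m) * n = 0 by linarith [sub_mul k m n]]; simp

theorem ne_between (n x i : ℤ) (h : x < i) (h' : i < x + n) (m : ℤ) : i ≠ x + m * n := by
  have := res_ne n x i h h' m 0
  intro e; apply this; omega

theorem ne_between' (n x i : ℤ) (h : i < x) (h' : x < i + n) (m : ℤ) : i ≠ x + m * n := by
  have := res_ne n i x h h' 0 m
  intro e; apply this; omega

theorem cls (n a b c i : ℤ) : (∃ m, i = a + m * n) ∨ (∃ m, i = b + m * n) ∨ (∃ m, i = c + m * n) ∨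
    ((∀ m, i ≠ a + m * n) ∧ (∀ m, i ≠ b + m * n) ∧ (∀ m, i ≠ c + m * n)) := by
  by_cases h1 : ∃ m, i = a + m * n
  · exact Or.inl h1
  by_cases h2 : ∃ m, i = b + m * n
  · exact Or.inr (Or.inl h2)
  by_cases h3 : ∃ m, i = c + m * n
  · exact Or.inr (Or.inr (Or.inl h3))
  push Not at h1 h2 h3
  exact Or.inr (Or.inr (Or.inr ⟨h1, h2, h3⟩))

theorem affT_invol_s8 (n a b : ℤ) (h : a < b) (h' : b < a + n) (i : ℤ) :
    affT n a b (affT n a b i) = i := by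
  rcases cls n a b b i with ⟨m, rfl⟩ | ⟨m, rfl⟩ | ⟨m, rfl⟩ | ⟨ha, hb, -⟩
  · rw [affT_left_s8, affT_right_s8 n a b m h h']
  · rw [affT_right_s8 n a b m h h', affT_left_s8]
  · rw [affT_right_s8 n a b m h h', affT_left_s8]
  · rw [affT_other n a b i ha hb, affT_other n a b i ha hb]

theorem affT_shift (n a b : ℤ) (h : a < b) (h' : b < a + n) (i : ℤ) :
    affT n a b (i + n) = affT n a b i + n := by
  simp only [affT, show i + n - a = i - a + n by ring, show i + n - b = i - b + n by ring,
    Int.add_emod_right]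
  split_ifs <;> ring

theorem affT_braid (n a b c : ℤ) (hab : a < b) (hbc : b < c) (hca : c < a + n) (i : ℤ) :
    affT n b c (affT n a b i) = affT n a b (affT n a c i) := by
  have e1 : ∀ m, affT n b c (a + m * n) = a + m * n := fun m =>
    affT_other n b c _ (fun k => res_ne n a b hab (by omega) m k)
      (fun k => res_ne n a c (by omega) (by omega) m k)
  have e2 : ∀ m, affT n a b (c + m * n) = c + m * n := fun m =>
    affT_other n a b _ (fun k => (res_ne n a c (by omega) (by omega) k m).symm)
      (fun k => (res_ne n b c (by omega) (by omega) k m).symm)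
  have e3 : ∀ m, affT n a c (b + m * n) = b + m * n := fun m =>
    affT_other n a c _ (fun k => (res_ne n a b (by omega) (by omega) k m).symm)
      (fun k => (res_ne n b c (by omega) (by omega) m k))
  rcases cls n a b c i with ⟨m, rfl⟩ | ⟨m, rfl⟩ | ⟨m, rfl⟩ | ⟨ha, hb, hc⟩
  · rw [affT_left_s8, affT_left_s8, affT_left_s8, e2]
  · rw [affT_right_s8 n a b m hab (by omega), e1, e3, affT_right_s8 n a b m hab (by omega)]
  · rw [e2, affT_right_s8 n b c m hbc (by omega), affT_right_s8 n a c m (by omega) hca, affT_left_s8]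
  · rw [affT_other n a b i ha hb, affT_other n b c i hb hc, affT_other n a c i ha hc,
      affT_other n a b i ha hb]

theorem shift_mul (n : ℤ) (σ : ℤ → ℤ) (h : ∀ i, σ (i + n) = σ i + n) (i m : ℤ) :
    σ (i + m * n) = σ i + m * n := by
  induction m using Int.induction_on with
  | zero => simp
  | succ k ih =>
    rw [show i + ((k:ℤ) + 1) * n = i + k * n + n by ring, h, ih]; ring
  | pred k ih =>
    have := h (i + (-(k:ℤ) - 1) * n)
    rw [show i + (-(k:ℤ) - 1) * n + n = i + -k * n by ring, ih] at this
    linarith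

/-- Case `(a b)` vs `(a c)` with `a < b < c < a + n`: `σ` and `σ'`
have a common parent `ρ = σ ∘ t_{b,c}`, forming a quadrilateral in the poset. -/
theorem common_parent_ab_ac (n : ℤ) (hn : 0 < n) (σ σ' : ℤ → ℤ)
    (hσ : IsDecoratedPerm n σ) (hσ' : IsDecoratedPerm n σ')
    (a b c : ℤ) (hab : a < b) (hbc : b < c) (hca : c < a + n)
    (h1 : AllowedBT n σ a b) (h2 : AllowedBT n σ' a c)
    (heq : σ ∘ affT n a b = σ' ∘ affT n a c) :
    IsDecoratedPerm n (σ ∘ affT n b c) ∧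
    AllowedBT n (σ ∘ affT n b c) b c ∧ (σ ∘ affT n b c) ∘ affT n b c = σ ∧
    AllowedBT n (σ ∘ affT n b c) a b ∧ (σ ∘ affT n b c) ∘ affT n a b = σ' := by
  obtain ⟨hbij, hper, hbd⟩ := hσ
  obtain ⟨-, -, p1, p2, p3, p4⟩ := h1
  obtain ⟨-, -, q1, q2, q3, q4⟩ := h2
  have hρ : (σ ∘ affT n b c) ∘ affT n a b = σ' := by
    funext i
    have := congrFun heq (affT n a c i)
    simp only [Function.comp] at this ⊢
    rw [affT_invol_s8 n a c (by omega) hca] at this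
    rw [affT_braid n a b c hab hbc hca, this]
  have hb : affT n b c b = c := by simpa using affT_left_s8 n b c 0
  have hc : affT n b c c = b := by simpa using affT_right_s8 n b c 0 hbc (by omega)
  have hoth : ∀ i, a ≤ i → i < c → i ≠ b → affT n b c i = i := by
    intro i h1 h2 h3
    rcases lt_or_gt_of_ne h3 with h | h
    · exact affT_other n b c i (ne_between' n b i h (by omega)) (ne_between' n c i h2 (by omega))
    · exact affT_other n b c i (ne_between n b i h (by omega)) (ne_between' n c i h2 (by omega))
  have ta : affT n a b a = b := by simpa using affT_left_s8 n a b 0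
  have tb : affT n a b b = a := by simpa using affT_right_s8 n a b 0 hab (by omega)
  have toth : ∀ i, b < i → i ≤ c → affT n a b i = i := by
    intro i h1 h2
    exact affT_other n a b i (ne_between n a i (by omega) (by omega))
      (ne_between n b i (by omega) (by omega))
  have ha := hoth a le_rfl (by omega) (by omega)
  have sa : σ' a = σ c := by rw [← hρ]; simp [ta, hb]
  have sb : σ' b = σ a := by rw [← hρ]; simp [tb, ha]
  have sc : σ' c = σ b := by rw [← hρ]; simp [toth c hbc le_rfl, hc]
  rw [sa] at q1
  rw [sa, sc] at q2 q4
  rw [sc] at q3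
  have hne : σ a ≠ σ c := fun e => by have := hbij.1 e; omega
  have hlt : σ a < σ c := by
    by_contra hcon
    exact q4 ⟨b, hab, hbc, by rw [sb]; omega, by rw [sb]; exact p2⟩
  refine ⟨⟨?_, ?_, ?_⟩, ⟨hbc, by omega, ?_⟩, ?_, ⟨hab, by omega, ?_⟩, hρ⟩
  · exact hbij.comp (Function.Involutive.bijective (affT_invol_s8 n b c hbc (by omega)))
  · intro i
    simp only [Function.comp]
    rw [affT_shift n b c hbc (by omega), hper]
  · intro i
    simp only [Function.comp]
    rcases cls n b c c i with ⟨m, rfl⟩ | ⟨m, rfl⟩ | ⟨m, rfl⟩ | ⟨h1, h2, -⟩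
    · rw [affT_left_s8, shift_mul n σ hper]; constructor <;> linarith
    · rw [affT_right_s8 n b c m hbc (by omega), shift_mul n σ hper]
      constructor <;> linarith
    · rw [affT_right_s8 n b c m hbc (by omega), shift_mul n σ hper]
      constructor <;> linarith
    · rw [affT_other n b c i h1 h2]; exact hbd i
  · simp only [Function.comp, hb, hc]
    refine ⟨q1, q2, by omega, ?_⟩
    rintro ⟨q, x1, x2, x3, x4⟩
    refine q4 ⟨q, by omega, x2, ?_⟩
    rw [← hρ]
    simp only [Function.comp, toth q x1 x2.le]
    exact ⟨x3, x4⟩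
  · funext i
    simp only [Function.comp, affT_invol_s8 n b c hbc (show c < b + n by omega)]
  · simp only [Function.comp, ha, hb]
    refine ⟨p1, hlt, by omega, ?_⟩
    rintro ⟨q, x1, x2, x3, x4⟩
    rw [hoth q x1.le (by omega) (by omega)] at x3 x4
    exact p4 ⟨q, x1, x2, x3, by omega⟩
end

section
/- Let U = {(x, y, z) ∈ ℝ³ : x > 0, y > 0, z > 0} and define F : U → ℝ³ by F(x, y, z) = (y·z/(x + z), x + z, x·y/(x + z)). Then for every (x, y, z) ∈ U, the Jacobian determinant of F at (x, y, z) equals y/(x + z) = +F₁(x,y,z)·F₂(x,y,z)·F₃(x,y,z)/(x·y·z). Consequently the change of variables (α_j, α_{j+1}, α_{j+2}) ↦ (β_j, β_{j+1}, β_{j+2}) = (α_{j+1}α_{j+2}/(α_j + α_{j+2}), α_j + α_{j+2}, α_j α_{j+1}/(α_j + α_{j+2})) arising from the square move satisfies dlog β_{j+2} ∧ dlog β_{j+1} ∧ dlog β_j = + dlog α_{j+2} ∧ dlog α_{j+1} ∧ dlog α_j, so the two BCFW reference charts related by this substitution have the same orientation. -/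
/-- Coordinates on `ℝ × ℝ × ℝ`. -/
noncomputable def tripleEquiv : (ℝ × ℝ × ℝ) ≃ₗ[ℝ] (Fin 3 → ℝ) where
  toFun p := ![p.1, p.2.1, p.2.2]
  invFun v := (v 0, v 1, v 2)
  map_add' p q := by ext i; fin_cases i <;> simp
  map_smul' c p := by ext i; fin_cases i <;> simp
  left_inv p := by simp
  right_inv v := by ext i; fin_cases i <;> simp

theorem det_triple (f : (ℝ × ℝ × ℝ) →ₗ[ℝ] (ℝ × ℝ × ℝ)) :
    LinearMap.det f = Matrix.det
      !![(f (1,0,0)).1, (f (0,1,0)).1, (f (0,0,1)).1;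
         (f (1,0,0)).2.1, (f (0,1,0)).2.1, (f (0,0,1)).2.1;
         (f (1,0,0)).2.2, (f (0,1,0)).2.2, (f (0,0,1)).2.2] := by
  rw [← LinearMap.det_toMatrix (Module.Basis.ofEquivFun tripleEquiv)]
  congr 1
  ext i j
  fin_cases i <;> fin_cases j <;>
    simp [LinearMap.toMatrix_apply, tripleEquiv]


/-- The square-move substitution
`(β_j, β_{j+1}, β_{j+2}) = (yz/(x+z), x+z, xy/(x+z))` has Jacobian determinant
`y/(x+z) = +F₁·F₂·F₃/(x·y·z)` on the positive octant, so the two BCFW reference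
charts related by it have the same orientation. -/
theorem jacobian_case_iv (x y z : ℝ) (hx : 0 < x) (hy : 0 < y) (hz : 0 < z) :
    (fderiv ℝ (fun p : ℝ × ℝ × ℝ =>
        (p.2.1 * p.2.2 / (p.1 + p.2.2), p.1 + p.2.2, p.1 * p.2.1 / (p.1 + p.2.2)))
      (x, y, z)).det = y / (x + z) ∧
      y / (x + z) =
        (y * z / (x + z)) * (x + z) * (x * y / (x + z)) / (x * y * z) := by
  have hs : x + z ≠ 0 := by positivity
  refine ⟨?_, by field_simp⟩
  have h1 : HasFDerivAt (fun p : ℝ × ℝ × ℝ => p.1) (ContinuousLinearMap.fst ℝ ℝ (ℝ × ℝ)) (x, y, z) :=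
    hasFDerivAt_fst
  have h2 : HasFDerivAt (fun p : ℝ × ℝ × ℝ => p.2.1)
      ((ContinuousLinearMap.fst ℝ ℝ ℝ).comp (ContinuousLinearMap.snd ℝ ℝ (ℝ × ℝ))) (x, y, z) :=
    ((ContinuousLinearMap.fst ℝ ℝ ℝ).comp (ContinuousLinearMap.snd ℝ ℝ (ℝ × ℝ))).hasFDerivAt
  have h3 : HasFDerivAt (fun p : ℝ × ℝ × ℝ => p.2.2)
      ((ContinuousLinearMap.snd ℝ ℝ ℝ).comp (ContinuousLinearMap.snd ℝ ℝ (ℝ × ℝ))) (x, y, z) :=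
    ((ContinuousLinearMap.snd ℝ ℝ ℝ).comp (ContinuousLinearMap.snd ℝ ℝ (ℝ × ℝ))).hasFDerivAt
  have hd := h1.fun_add h3
  have hi := (hasDerivAt_inv hs).comp_hasFDerivAt (x, y, z) hd
  simp only [div_eq_mul_inv]
  have H := ((h2.fun_mul h3).fun_mul hi).prodMk (hd.prodMk ((h1.fun_mul h2).fun_mul hi))
  erw [H.fderiv]
  rw [ ContinuousLinearMap.det, det_triple, Matrix.det_fin_three]
  simp
  field_simp
  ring
end

section
/- Let U = {(x, y, z, w) ∈ ℝ⁴ : x > 0, y > 0, z > 0, w > 0} and define F : U → ℝ⁴ by F(x, y, z, w) = (x·y·z·w/(x + w), x + w, x·y/(x + w), x·z/(x + w)). Then for every (x, y, z, w) ∈ U, the Jacobian determinant of F at (x, y, z, w) equals −x²·y·z/(x + w)² = −F₁·F₂·F₃·F₄/(x·y·z·w). Consequently the change of variables (α_j, α_{j+1}, α_{j+2}, α_{j+3}) ↦ (β_j, β_{j+1}, β_{j+2}, β_{j+3}) = (α_j α_{j+1} α_{j+2} α_{j+3}/(α_j + α_{j+3}), α_j + α_{j+3}, α_j α_{j+1}/(α_j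 + α_{j+3}), α_j α_{j+2}/(α_j + α_{j+3})) satisfies dlog β_{j+3} ∧ dlog β_{j+2} ∧ dlog β_{j+1} ∧ dlog β_j = − dlog α_{j+3} ∧ dlog α_{j+2} ∧ dlog α_{j+1} ∧ dlog α_j, so the two BCFW reference charts related by this substitution are oppositely oriented. -/
/-- Coordinates on the fourfold product. -/
noncomputable def coordEquiv : (ℝ × ℝ × ℝ × ℝ) ≃ₗ[ℝ] (Fin 4 → ℝ) where
  toFun p := ![p.1, p.2.1, p.2.2.1, p.2.2.2]
  invFun v := (v 0, v 1, v 2, v 3)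
  map_add' p q := by ext i; fin_cases i <;> simp
  map_smul' c p := by ext i; fin_cases i <;> simp
  left_inv p := by simp
  right_inv v := by ext i; fin_cases i <;> simp

/-- The substitution
`(β_j, β_{j+1}, β_{j+2}, β_{j+3}) = (xyzw/(x+w), x+w, xy/(x+w), xz/(x+w))` has
Jacobian determinant `-x²yz/(x+w)² = -F₁·F₂·F₃·F₄/(x·y·z·w)` on the positive orthant,
so the two BCFW reference charts related by it are oppositely oriented. -/
theorem jacobian_case_vi (x y z w : ℝ) (hx : 0 < x) (hy : 0 < y) (hz : 0 < z)
    (hw : 0 < w) :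
    (fderiv ℝ (fun p : ℝ × ℝ × ℝ × ℝ =>
        (p.1 * p.2.1 * p.2.2.1 * p.2.2.2 / (p.1 + p.2.2.2), p.1 + p.2.2.2,
          p.1 * p.2.1 / (p.1 + p.2.2.2), p.1 * p.2.2.1 / (p.1 + p.2.2.2)))
      (x, y, z, w)).det = -(x ^ 2 * y * z / (x + w) ^ 2) ∧
      -(x ^ 2 * y * z / (x + w) ^ 2) =
        -((x * y * z * w / (x + w)) * (x + w) * (x * y / (x + w)) *
            (x * z / (x + w))) / (x * y * z * w) := by
  have hs : x + w ≠ 0 := by positivity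
  refine ⟨?_, by field_simp⟩
  have h1 : HasFDerivAt (fun p : ℝ × ℝ × ℝ × ℝ => p.1)
      (ContinuousLinearMap.fst ℝ ℝ (ℝ × ℝ × ℝ)) (x, y, z, w) := hasFDerivAt_fst
  have hr : HasFDerivAt (fun p : ℝ × ℝ × ℝ × ℝ => p.2)
      (ContinuousLinearMap.snd ℝ ℝ (ℝ × ℝ × ℝ)) (x, y, z, w) := hasFDerivAt_snd
  have h2 := hr.fst
  have h3 := hr.snd.fst
  have h4 := hr.snd.snd
  have hsum := h1.fun_add h4
  have hinv : HasFDerivAt (fun p : ℝ × ℝ × ℝ × ℝ => (p.1 + p.2.2.2)⁻¹) _ (x, y, z, w) :=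
    (hasDerivAt_inv hs).comp_hasFDerivAt (x, y, z, w) hsum
  have hF := ((((h1.fun_mul h2).fun_mul h3).fun_mul h4).fun_mul hinv).prodMk
    (hsum.prodMk (((h1.fun_mul h2).fun_mul hinv).prodMk ((h1.fun_mul h3).fun_mul hinv)))
  simp only [← div_eq_mul_inv] at hF
  rw [hF.fderiv, ContinuousLinearMap.det,
    ← LinearMap.det_toMatrix (Module.Basis.ofEquivFun coordEquiv)]
  simp [-LinearMap.det_toMatrix, Matrix.det_succ_row_zero, Fin.sum_univ_succ, LinearMap.toMatrix_apply, coordEquiv,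
    Fin.succAbove, Pi.single_apply]
  field_simp
  ring
end
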